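/- For every δ > 1/2 and σ > 0, the function F attains its infimum over (0,∞), and the minimizer τ_* ∈ (0,∞) is unique; in particular F(τ) → ∞ both as τ → 0⁺ and as τ → ∞. -/

import Mathlib

open MeasureTheory Set Filter

/-- The standard normal density `p(h) = (1/√(2π)) e^{−h²/2}`. -/
noncomputable def gaussPDF (h : ℝ) : ℝ := (Real.sqrt (2 * Real.pi))⁻¹ * Real.exp (-(h ^ 2) / 2)

/-- The objective function
`F(τ) = (τ/2)(δ − 1/2) + σ²/(2τ) + (τ/2)∫_{2/τ}^∞ (h − 2/τ)² p(h) dh`. -/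
noncomputable def Fobj (δ σ τ : ℝ) : ℝ :=
  τ / 2 * (δ - 1 / 2) + σ ^ 2 / (2 * τ)
    + τ / 2 * ∫ h in Set.Ioi (2 / τ), (h - 2 / τ) ^ 2 * gaussPDF h

/-!
`τ ∫_{2/τ}^∞ (h − 2/τ)² p(h) dh = τ G(2/τ)`, where `G(c)` is the integral of the convex functions
`c ↦ ((h − c)⁺)²` against the Gaussian and hence is convex. The perspective `(x, τ) ↦ τ G(x/τ)` of
a convex function is convex, so the summand `σ²/(2τ)` makes `F` strictly convex. Since `G ≥ 0`, the
summands `σ²/(2τ)` and `(τ/2)(δ − 1/2)` force `F → ∞` at `0` and at `∞`, and a coercive strictly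
convex function has exactly one minimizer.
-/

open Topology ProbabilityTheory

theorem inv_smul_combo_eq {𝕜 E : Type*} [Field 𝕜] [AddCommMonoid E] [Module 𝕜 E] {t u : 𝕜}
    (ht : t ≠ 0) (hu : u ≠ 0) (a b : 𝕜) (x y : E) :
    (a * t + b * u)⁻¹ • (a • x + b • y) =
      (a * t / (a * t + b * u)) • t⁻¹ • x + (b * u / (a * t + b * u)) • u⁻¹ • y := by
  match_scalars <;> field_simp

section Perspective

variable {𝕜 E β : Type*} [Field 𝕜] [LinearOrder 𝕜] [IsStrictOrderedRing 𝕜]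
  [AddCommMonoid β] [PartialOrder β] [Module 𝕜 β] [PosSMulMono 𝕜 β]

theorem convexOn_perspective [AddCommMonoid E] [Module 𝕜 E] {s : Set E} {f : E → β}
    (hf : ConvexOn 𝕜 s f) :
    ConvexOn 𝕜 {p : E × 𝕜 | 0 < p.2 ∧ p.2⁻¹ • p.1 ∈ s} fun p => p.2 • f (p.2⁻¹ • p.1) := by
  have combo_pos {t u a b : 𝕜} (ht : 0 < t) (hu : 0 < u) (ha : 0 ≤ a) (hb : 0 ≤ b)
      (hab : a + b = 1) : 0 < a * t + b * u := convex_Ioi (𝕜 := 𝕜) 0 ht hu ha hb hab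
  have weights_sum {v w : 𝕜} (h : 0 < v + w) : v / (v + w) + w / (v + w) = 1 := by
    rw [← add_div, div_self h.ne']
  refine ⟨?_, ?_⟩
  · rintro ⟨x, t⟩ ⟨ht, hx⟩ ⟨y, u⟩ ⟨hu, hy⟩ a b ha hb hab
    have hv := combo_pos ht hu ha hb hab
    refine ⟨hv, ?_⟩
    simp only [Prod.smul_mk, Prod.mk_add_mk, smul_eq_mul] at ht hu hv ⊢
    rw [inv_smul_combo_eq ht.ne' hu.ne']
    exact hf.1 hx hy (by positivity) (by positivity) (weights_sum hv)
  · rintro ⟨x, t⟩ ⟨ht, hx⟩ ⟨y, u⟩ ⟨hu, hy⟩ a b ha hb hab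
    have hv := combo_pos ht hu ha hb hab
    simp only [Prod.smul_mk, Prod.mk_add_mk, smul_eq_mul] at ht hu hv hx hy ⊢
    rw [inv_smul_combo_eq ht.ne' hu.ne']
    calc (a * t + b * u) • f ((a * t / (a * t + b * u)) • t⁻¹ • x
            + (b * u / (a * t + b * u)) • u⁻¹ • y)
        ≤ (a * t + b * u) • ((a * t / (a * t + b * u)) • f (t⁻¹ • x)
            + (b * u / (a * t + b * u)) • f (u⁻¹ • y)) :=
          smul_le_smul_of_nonneg_left
            (hf.2 hx hy (by positivity) (by positivity) (weights_sum hv)) hv.le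
      _ = a • t • f (t⁻¹ • x) + b • u • f (u⁻¹ • y) := by
          simp only [smul_add, smul_smul, mul_div_cancel₀ _ hv.ne']

theorem convexOn_smul_comp_inv_smul [AddCommGroup E] [Module 𝕜 E] {f : E → β}
    (hf : ConvexOn 𝕜 univ f) (x : E) : ConvexOn 𝕜 (Ioi 0) fun t : 𝕜 => t • f (t⁻¹ • x) := by
  simpa [Function.comp_def, preimage, Ioi] using
    (convexOn_perspective hf).comp_affineMap ((AffineMap.const 𝕜 𝕜 x).prod (AffineMap.id 𝕜 𝕜))

end Perspective

theorem strictConvexOn_const_smul {𝕜 E β : Type*} [Semiring 𝕜] [PartialOrder 𝕜]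
    [AddCommMonoid E] [SMul 𝕜 E] [AddCommMonoid β] [PartialOrder β] [Module 𝕜 β]
    [SMulCommClass 𝕜 𝕜 β] [PosSMulStrictMono 𝕜 β]
    {s : Set E} {f : E → β} {c : 𝕜} (hc : 0 < c) (hf : StrictConvexOn 𝕜 s f) :
    StrictConvexOn 𝕜 s fun x => c • f x :=
  ⟨hf.1, fun x hx y hy hxy a b ha hb hab => by
    calc c • f (a • x + b • y)
        < c • (a • f x + b • f y) := smul_lt_smul_of_pos_left (hf.2 hx hy hxy ha hb hab) hc
      _ = a • c • f x + b • c • f y := by rw [smul_add, smul_comm c, smul_comm c]⟩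

theorem strictConvexOn_inv : StrictConvexOn ℝ (Ioi 0) fun x : ℝ => x⁻¹ := by
  simpa only [zpow_neg_one] using strictConvexOn_zpow (m := -1) (by norm_num) (by norm_num)

section PartialMoment

/-- The upper partial moment `∫_c^∞ (h − c)ⁿ dμ(h)` of order `n` of `μ` about the threshold `c`;
with `n = 2` and `μ` the standard normal distribution it is the integral occurring in `Fobj`. -/
noncomputable def upperPartialMoment (n : ℕ) (μ : Measure ℝ) (c : ℝ) : ℝ :=
  ∫ h in Ioi c, (h - c) ^ n ∂μ

variable {n : ℕ} {μ : Measure ℝ}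

theorem upperPartialMoment_nonneg (n : ℕ) (μ : Measure ℝ) (c : ℝ) :
    0 ≤ upperPartialMoment n μ c :=
  setIntegral_nonneg measurableSet_Ioi fun _ hh => pow_nonneg (sub_nonneg.2 (mem_Ioi.1 hh).le) n

theorem upperPartialMoment_eq_integral_max (hn : n ≠ 0) (μ : Measure ℝ) (c : ℝ) :
    upperPartialMoment n μ c = ∫ h, max (h - c) 0 ^ n ∂μ := by
  calc upperPartialMoment n μ c
      = ∫ h in Ioi c, max (h - c) 0 ^ n ∂μ :=
        setIntegral_congr_fun measurableSet_Ioi fun h hh => by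
          simp only [max_eq_left (sub_nonneg.2 (mem_Ioi.1 hh).le)]
    _ = ∫ h, max (h - c) 0 ^ n ∂μ :=
        setIntegral_eq_integral_of_forall_compl_eq_zero fun h hh => by
          rw [max_eq_right (sub_nonpos.2 (not_lt.1 hh)), zero_pow hn]

theorem integrable_max_sub_pow [IsFiniteMeasure μ] (hμ : MemLp id n μ) (c : ℝ) :
    Integrable (fun h => max (h - c) 0 ^ n) μ := by
  have hmax : MemLp (fun h => max (h - c) 0) n μ :=
    (hμ.sub (memLp_const c)).sup (memLp_const 0)
  simpa [abs_of_nonneg] using hmax.integrable_norm_pow'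

theorem convexOn_max_sub_pow (n : ℕ) (h : ℝ) :
    ConvexOn ℝ univ fun c => max (h - c) 0 ^ n := by
  have hsub : ConvexOn ℝ univ fun c => h - c :=
    (convexOn_const h convex_univ).sub (concaveOn_id convex_univ)
  exact (hsub.sup (convexOn_const 0 convex_univ)).pow (fun _ _ => le_max_right _ _) n

theorem convexOn_upperPartialMoment [IsFiniteMeasure μ] (hn : n ≠ 0) (hμ : MemLp id n μ) :
    ConvexOn ℝ univ (upperPartialMoment n μ) := by
  simp only [funext (upperPartialMoment_eq_integral_max hn μ)]
  exact integral_convexOn_of_integrand_ae convex_univ (ae_of_all _ (convexOn_max_sub_pow n))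
    fun c _ => integrable_max_sub_pow hμ c

end PartialMoment

theorem compactIccSpace_coe {α : Type*} [TopologicalSpace α] [Preorder α] [CompactIccSpace α]
    (s : Set α) [s.OrdConnected] : CompactIccSpace s where
  isCompact_Icc {a b} := by
    rw [Subtype.isCompact_iff, image_subtype_val_Icc]
    exact isCompact_Icc

theorem exists_isMinOn_Ioi_of_tendsto_atTop {α β : Type*} [LinearOrder α] [DenselyOrdered α]
    [NoMaxOrder α] [TopologicalSpace α] [OrderTopology α] [CompactIccSpace α]
    [LinearOrder β] [TopologicalSpace β] [ClosedIicTopology β] {a : α} {f : α → β}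
    (hf : ContinuousOn f (Ioi a)) (hbot : Tendsto f (𝓝[>] a) atTop)
    (htop : Tendsto f atTop atTop) : ∃ x ∈ Ioi a, IsMinOn f (Ioi a) x := by
  have := compactIccSpace_coe (Ioi a)
  have hcoercive : Tendsto (fun x : Ioi a => f x) (cocompact (Ioi a)) atTop :=
    .mono_left (.sup ((tendsto_comp_coe_Ioi_atBot).2 hbot) (tendsto_comp_val_Ioi_atTop.2 htop))
      cocompact_le_atBot_atTop
  obtain ⟨⟨x, hx⟩, hmin⟩ :=
    (continuousOn_iff_continuous_domRestrict.1 hf).exists_forall_le hcoercive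
  exact ⟨x, hx, fun y hy => hmin ⟨y, hy⟩⟩

theorem gaussPDF_eq_gaussianPDFReal : gaussPDF = gaussianPDFReal 0 1 := by
  ext h
  simp [gaussPDF, gaussianPDFReal]

theorem setIntegral_mul_gaussPDF {s : Set ℝ} (hs : MeasurableSet s) (f : ℝ → ℝ) :
    ∫ h in s, f h * gaussPDF h = ∫ h in s, f h ∂gaussianReal 0 1 := by
  rw [gaussianReal_of_var_ne_zero 0 one_ne_zero,
    setIntegral_withDensity_eq_setIntegral_toReal_smul (measurable_gaussianPDF 0 1)
      (ae_of_all _ fun _ => gaussianPDF_lt_top) f hs]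
  simp only [toReal_gaussianPDF, gaussPDF_eq_gaussianPDFReal, smul_eq_mul, mul_comm]

theorem Fobj_eq_add_perspective (δ σ τ : ℝ) :
    Fobj δ σ τ = (δ - 1 / 2) / 2 * τ + σ ^ 2 / 2 * τ⁻¹
      + 1 / 2 * (τ * upperPartialMoment 2 (gaussianReal 0 1) (τ⁻¹ * 2)) := by
  rw [Fobj, setIntegral_mul_gaussPDF measurableSet_Ioi, inv_mul_eq_div, upperPartialMoment]
  ring

theorem strictConvexOn_Fobj (δ : ℝ) {σ : ℝ} (hσ : σ ≠ 0) :
    StrictConvexOn ℝ (Ioi 0) (Fobj δ σ) := by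
  have hlinear : ConvexOn ℝ (Ioi 0) fun τ => (δ - 1 / 2) / 2 * τ :=
    (LinearMap.mulLeft ℝ ((δ - 1 / 2) / 2)).convexOn (convex_Ioi 0)
  have hinv : StrictConvexOn ℝ (Ioi 0) fun τ : ℝ => σ ^ 2 / 2 * τ⁻¹ :=
    strictConvexOn_const_smul (by positivity) strictConvexOn_inv
  have hmoment : ConvexOn ℝ univ (upperPartialMoment 2 (gaussianReal 0 1)) :=
    convexOn_upperPartialMoment two_ne_zero (memLp_id_gaussianReal 2)
  have hpersp := (convexOn_smul_comp_inv_smul hmoment 2).smul one_half_pos.le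
  simp only [funext (Fobj_eq_add_perspective δ σ)]
  exact (hlinear.add_strictConvexOn hinv).add_convexOn hpersp

theorem mul_add_mul_inv_le_Fobj (δ σ : ℝ) {τ : ℝ} (hτ : 0 ≤ τ) :
    (δ - 1 / 2) / 2 * τ + σ ^ 2 / 2 * τ⁻¹ ≤ Fobj δ σ τ := by
  have := upperPartialMoment_nonneg 2 (gaussianReal 0 1) (τ⁻¹ * 2)
  rw [Fobj_eq_add_perspective, le_add_iff_nonneg_right]
  positivity

theorem tendsto_Fobj_nhdsGT_zero (δ : ℝ) {σ : ℝ} (hσ : σ ≠ 0) :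
    Tendsto (Fobj δ σ) (𝓝[>] 0) atTop := by
  have hlinear : Tendsto (fun τ : ℝ => (δ - 1 / 2) / 2 * τ) (𝓝[>] 0) (𝓝 ((δ - 1 / 2) / 2 * 0)) :=
    tendsto_nhdsWithin_of_tendsto_nhds (continuous_const_mul _).continuousAt
  have hinv : Tendsto (fun τ : ℝ => σ ^ 2 / 2 * τ⁻¹) (𝓝[>] 0) atTop :=
    tendsto_inv_nhdsGT_zero.const_mul_atTop (by positivity)
  refine tendsto_atTop_mono' _ ?_ (hlinear.add_atTop hinv)
  filter_upwards [self_mem_nhdsWithin] with τ hτ using mul_add_mul_inv_le_Fobj δ σ (le_of_lt hτ)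

theorem tendsto_Fobj_atTop {δ : ℝ} (hδ : 1 / 2 < δ) (σ : ℝ) :
    Tendsto (Fobj δ σ) atTop atTop := by
  have hlinear : Tendsto (fun τ => (δ - 1 / 2) / 2 * τ) atTop atTop :=
    tendsto_id.const_mul_atTop (half_pos (sub_pos.2 hδ))
  have hinv : Tendsto (fun τ : ℝ => σ ^ 2 / 2 * τ⁻¹) atTop (𝓝 (σ ^ 2 / 2 * 0)) :=
    tendsto_inv_atTop_zero.const_mul _
  refine tendsto_atTop_mono' _ ?_ (hlinear.atTop_add hinv)
  filter_upwards [eventually_ge_atTop 0] with τ hτ using mul_add_mul_inv_le_Fobj δ σ hτ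

/-- For every `δ > 1/2` and `σ > 0`, `F` attains its infimum over `(0,∞)` at a unique
minimizer `τ_* ∈ (0,∞)`; in particular `F(τ) → ∞` both as `τ → 0⁺` and as `τ → ∞`. -/
theorem Fobj_exists_unique_minimizer (δ σ : ℝ) (hδ : 1 / 2 < δ) (hσ : 0 < σ) :
    (∃ τs ∈ Set.Ioi (0 : ℝ), IsMinOn (Fobj δ σ) (Set.Ioi (0 : ℝ)) τs ∧
      ∀ τ ∈ Set.Ioi (0 : ℝ), IsMinOn (Fobj δ σ) (Set.Ioi (0 : ℝ)) τ → τ = τs) ∧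
    Tendsto (Fobj δ σ) (nhdsWithin 0 (Set.Ioi (0 : ℝ))) atTop ∧
    Tendsto (Fobj δ σ) atTop atTop := by
  have hconv := strictConvexOn_Fobj δ hσ.ne'
  have hzero := tendsto_Fobj_nhdsGT_zero δ hσ.ne'
  have htop := tendsto_Fobj_atTop hδ σ
  obtain ⟨τs, hτs, hmin⟩ := exists_isMinOn_Ioi_of_tendsto_atTop
    (hconv.convexOn.continuousOn isOpen_Ioi) hzero htop
  exact ⟨⟨τs, hτs, hmin, fun τ hτ hτmin => hconv.eq_of_isMinOn hτmin hmin hτ hτs⟩, hzero, htop⟩
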